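/- For all r, σ > 0 and γ > 0, the joint Cramér–Rao bound on range for the MI-ISAC problem admits the closed form (J⁻¹)₁₁ = 2·r²/(9·γ). -/

import Mathlib

open Matrix Real

/-- Field attenuation constant `α(σ) = √(π f₀ μ₀ σ)`. -/
noncomputable def miAlpha (f₀ μ₀ σ : ℝ) : ℝ := Real.sqrt (Real.pi * f₀ * μ₀ * σ)

/-- `β(r,σ) = 3/r + α(σ)`. -/
noncomputable def miBeta (f₀ μ₀ r σ : ℝ) : ℝ := 3 / r + miAlpha f₀ μ₀ σ

/-- The MI-ISAC Fisher information matrix for joint range–conductivity estimation. -/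
noncomputable def miFIM (f₀ μ₀ r σ γ : ℝ) : Matrix (Fin 2) (Fin 2) ℝ :=
  !![γ * (miBeta f₀ μ₀ r σ ^ 2 + miAlpha f₀ μ₀ σ ^ 2),
     γ * miAlpha f₀ μ₀ σ * r * (miBeta f₀ μ₀ r σ + miAlpha f₀ μ₀ σ) / (2 * σ);
     γ * miAlpha f₀ μ₀ σ * r * (miBeta f₀ μ₀ r σ + miAlpha f₀ μ₀ σ) / (2 * σ),
     γ * miAlpha f₀ μ₀ σ ^ 2 * r ^ 2 / (2 * σ ^ 2)]

/-! The functions `3 log r + α(σ) r` and `α(σ) r` of `(r, σ)` have `r`-derivatives `β` and `α`, and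
both have `σ`-derivative `α r / (2σ)`, as `dα/dσ = α / (2σ)`. The Fisher information matrix is
`γ` times the Gram matrix of their Jacobian `B`, so `(J⁻¹)₁₁` is `γ⁻¹` times the squared norm of the
first row of `B⁻¹`. The two functions differ by `3 log r`, which does not involve `σ`: the rows of
`B` differ by `(3 / r, 0)`, so the first row of `B⁻¹` is `(r / 3) (1, -1)`. -/

theorem inv_transpose_mul_self_apply {n R : Type*} [Fintype n] [DecidableEq n] [CommRing R]
    (B : Matrix n n R) (i j : n) : (Bᵀ * B)⁻¹ i j = B⁻¹ i ⬝ᵥ B⁻¹ j := by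
  rw [Matrix.mul_inv_rev, ← Matrix.transpose_nonsing_inv]
  rfl

theorem nonsing_inv_units_smul {n R : Type*} [Fintype n] [DecidableEq n] [CommRing R]
    (k : Rˣ) (A : Matrix n n R) : (k • A)⁻¹ = k⁻¹ • A⁻¹ := by
  by_cases hA : IsUnit A.det
  · exact Matrix.inv_smul' A k hA
  · have hkA : ¬IsUnit (k • A).det := by
      rwa [Units.smul_def, Matrix.det_smul, ← Units.val_pow_eq_pow_val, Units.isUnit_units_mul]
    rw [Matrix.nonsing_inv_apply_not_isUnit _ hA, Matrix.nonsing_inv_apply_not_isUnit _ hkA,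
      smul_zero]

theorem inv_row_zero_of_const_col_one {K : Type*} [Field K] {s : K} (hs : s ≠ 0) (a b : K) :
    !![b, s; a, s]⁻¹ 0 = (b - a)⁻¹ • ![1, -1] := by
  have hdet : !![b, s; a, s].det = s * (b - a) := by
    rw [Matrix.det_fin_two_of]
    ring
  calc !![b, s; a, s]⁻¹ 0
      = (s * (b - a))⁻¹ • ![s, -s] := by
        rw [Matrix.inv_def, hdet, Matrix.adjugate_fin_two_of, Ring.inverse_eq_inv']
        rfl
    _ = (s * (b - a))⁻¹ • s • ![1, -1] := by simp
    _ = (b - a)⁻¹ • ![1, -1] := by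
        rw [smul_smul, mul_inv, mul_right_comm, inv_mul_cancel₀ hs, one_mul]

/-- The Jacobian of `(3 log r + α(σ) r, α(σ) r)` with respect to `(r, σ)`, of which `miFIM` is `γ`
times the Gram matrix. Its entries are given in closed form, using `dα/dσ = α / (2σ)`. -/
noncomputable def miJacobian (f₀ μ₀ r σ : ℝ) : Matrix (Fin 2) (Fin 2) ℝ :=
  !![miBeta f₀ μ₀ r σ, miAlpha f₀ μ₀ σ * r / (2 * σ);
     miAlpha f₀ μ₀ σ, miAlpha f₀ μ₀ σ * r / (2 * σ)]

theorem miFIM_eq_smul_transpose_mul_self (f₀ μ₀ r σ γ : ℝ) :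
    miFIM f₀ μ₀ r σ γ = γ • ((miJacobian f₀ μ₀ r σ)ᵀ * miJacobian f₀ μ₀ r σ) := by
  ext i j
  rw [Matrix.smul_apply, Matrix.mul_apply, Fin.sum_univ_two]
  fin_cases i <;> fin_cases j <;>
    simp only [miFIM, miJacobian, of_apply, transpose_apply, cons_val', cons_val_zero,
      cons_val_one, cons_val_fin_one, smul_eq_mul, Fin.zero_eta, Fin.mk_one, Fin.isValue] <;>
    ring

theorem miAlpha_pos {f₀ μ₀ σ : ℝ} (hf₀ : 0 < f₀) (hμ₀ : 0 < μ₀) (hσ : 0 < σ) :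
    0 < miAlpha f₀ μ₀ σ :=
  Real.sqrt_pos.mpr (by positivity)

theorem miJacobian_inv_row_zero {f₀ μ₀ r σ : ℝ} (hα : miAlpha f₀ μ₀ σ ≠ 0) (hr : r ≠ 0)
    (hσ : σ ≠ 0) : (miJacobian f₀ μ₀ r σ)⁻¹ 0 = (r / 3) • ![1, -1] := by
  have hs : miAlpha f₀ μ₀ σ * r / (2 * σ) ≠ 0 := by positivity
  have hβα : miBeta f₀ μ₀ r σ - miAlpha f₀ μ₀ σ = 3 / r := add_sub_cancel_right _ _
  rw [miJacobian, inv_row_zero_of_const_col_one hs, hβα, inv_div]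

/-- The joint Cramér–Rao bound on range admits the closed form `(J⁻¹)₁₁ = 2r²/(9γ)`. -/
theorem stmt_10 (f₀ μ₀ : ℝ) (hf₀ : 0 < f₀) (hμ₀ : 0 < μ₀)
    (r σ γ : ℝ) (hr : 0 < r) (hσ : 0 < σ) (hγ : 0 < γ) :
    (miFIM f₀ μ₀ r σ γ)⁻¹ 0 0 = 2 * r ^ 2 / (9 * γ) := by
  set B := miJacobian f₀ μ₀ r σ
  have hrow : B⁻¹ 0 = (r / 3) • ![1, -1] :=
    miJacobian_inv_row_zero (miAlpha_pos hf₀ hμ₀ hσ).ne' hr.ne' hσ.ne'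
  have hsmul : (γ • (Bᵀ * B))⁻¹ = γ⁻¹ • (Bᵀ * B)⁻¹ :=
    nonsing_inv_units_smul (Units.mk0 γ hγ.ne') (Bᵀ * B)
  calc (miFIM f₀ μ₀ r σ γ)⁻¹ 0 0
      = γ⁻¹ * (B⁻¹ 0 ⬝ᵥ B⁻¹ 0) := by
        rw [miFIM_eq_smul_transpose_mul_self, hsmul, Matrix.smul_apply,
          inv_transpose_mul_self_apply, smul_eq_mul]
    _ = γ⁻¹ * ((r / 3) * ((r / 3) * 2)) := by
        rw [hrow, smul_dotProduct, dotProduct_smul, Matrix.vec2_dotProduct']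
        norm_num
    _ = 2 * r ^ 2 / (9 * γ) := by ring
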